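/- Let α ∈ (1,2), T > 0, M ∈ ℝ, and let g : [0,T] × ℝ → ℝ be continuous and Lipschitz continuous in its second variable. Let y : [0,T] → ℝ be continuous and satisfy y(t) = y₀ + y₁ t + (1/Γ(α)) ∫₀ᵗ (t−s)^{α−1} (M y(s) + g(s, y(s))) ds for all t ∈ [0,T]. Then for all t ∈ [0,T], y(t) = y₀ E_{α,1}(M t^α) + y₁ t E_{α,2}(M t^α) + ∫₀ᵗ (t−τ)^{α−1} E_{α,α}(M (t−τ)^α) g(τ, y(τ)) dτ. -/

import Mathlib

/-- The two-parameter Mittag-Leffler function `E_{α,β}(z) = ∑ₖ zᵏ / Γ(αk + β)`. -/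
noncomputable def mlE (α β z : ℝ) : ℝ := ∑' k : ℕ, z ^ k / Real.Gamma (α * k + β)

/-! Write `k * f` for causal convolution. The fractional integrals `I^β f = rlKernel β * f` form a
semigroup, so summing a series of them shows that the Mittag-Leffler kernel `r = mlKernel α α M`
satisfies `r * f = I^α f + M r * (I^α f)`. Applying `r *` to the Volterra equation
`u = f + M I^α u` and comparing with this identity for `u` yields `I^α u = r * f`, hence
`u = f + M r * f`. Now let `f` be the initial data plus `I^α h`: the same identity for `h` turns
`I^α h` into `r * h`, while `rlKernel γ + M r * rlKernel γ = mlKernel α γ M` turns the initial data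
into Mittag-Leffler functions. -/

open Filter MeasureTheory Polynomial Real Set Topology
open scoped Nat

theorem rpow_mul_exp_neg_le_Gamma {r x : ℝ} (hr : 0 ≤ r) (hx : 1 ≤ x) :
    r ^ (x - 1) * exp (-r) ≤ Gamma x := by
  have hint : IntegrableOn (fun u => exp (-u) * u ^ (x - 1)) (Ioi 0) :=
    GammaIntegral_convergent (by linarith)
  have hsub : Ioi r ⊆ Ioi 0 := Ioi_subset_Ioi hr
  calc r ^ (x - 1) * exp (-r) = ∫ u in Ioi r, exp (-u) * r ^ (x - 1) := by
        rw [integral_mul_const, integral_exp_neg_Ioi, mul_comm]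
    _ ≤ ∫ u in Ioi r, exp (-u) * u ^ (x - 1) := by
        refine setIntegral_mono_on ((integrableOn_exp_neg_Ioi r).mul_const _)
          (hint.mono_set hsub) measurableSet_Ioi fun u hu => ?_
        have : r ^ (x - 1) ≤ u ^ (x - 1) := rpow_le_rpow hr (mem_Ioi.1 hu).le (by linarith)
        gcongr
    _ ≤ ∫ u in Ioi 0, exp (-u) * u ^ (x - 1) := by
        refine setIntegral_mono_set hint ?_ hsub.eventuallyLE
        filter_upwards [ae_restrict_mem measurableSet_Ioi] with u hu
        exact mul_nonneg (exp_pos _).le (rpow_nonneg (mem_Ioi.1 hu).le _)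
    _ = Gamma x := (Gamma_eq_integral (by linarith)).symm

theorem integral_rpow_mul_sub_rpow {a b t : ℝ} (ha : 0 < a) (hb : 0 < b) (ht : 0 < t) :
    ∫ x in 0..t, x ^ (a - 1) * (t - x) ^ (b - 1) =
      t ^ (a + b - 1) * (Gamma a * Gamma b / Gamma (a + b)) := by
  have hcast : ∫ x in 0..t, (x : ℂ) ^ ((a : ℂ) - 1) * ((t : ℂ) - x) ^ ((b : ℂ) - 1) =
      ∫ x in 0..t, ((x ^ (a - 1) * (t - x) ^ (b - 1) : ℝ) : ℂ) := by
    refine intervalIntegral.integral_congr fun x hx => ?_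
    rw [uIcc_of_le ht.le] at hx
    simp only [Complex.ofReal_mul, Complex.ofReal_cpow hx.1,
      Complex.ofReal_cpow (sub_nonneg.2 hx.2), Complex.ofReal_sub, Complex.ofReal_one]
  have hbeta := Complex.betaIntegral_scaled (a : ℂ) (b : ℂ) ht
  rw [hcast, intervalIntegral.integral_ofReal,
    Complex.betaIntegral_eq_Gamma_mul_div _ _ (by simpa) (by simpa)] at hbeta
  rw [← Complex.ofReal_inj, hbeta, ← Complex.ofReal_add, Complex.Gamma_ofReal,
    Complex.Gamma_ofReal, Complex.Gamma_ofReal, Complex.ofReal_mul, Complex.ofReal_cpow ht.le]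
  push_cast
  rfl

section MittagLeffler

variable {α β : ℝ}

theorem summable_mlE (hα : 0 < α) (β z : ℝ) :
    Summable fun k : ℕ => z ^ k / Gamma (α * k + β) := by
  obtain ⟨r, hr, hzr⟩ : ∃ r : ℝ, 0 < r ∧ |z| < r ^ α :=
    ((eventually_gt_atTop 0).and
      ((tendsto_rpow_atTop hα).eventually_gt_atTop |z|)).exists
  have hgeom : Summable fun k : ℕ => (|z| / r ^ α) ^ k :=
    summable_geometric_of_lt_one (by positivity) ((div_lt_one (by positivity)).2 hzr)
  have hlarge : ∀ᶠ k : ℕ in atTop, 1 ≤ α * k + β :=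
    ((tendsto_natCast_atTop_atTop.const_mul_atTop hα).atTop_add
      tendsto_const_nhds).eventually_ge_atTop 1
  refine (hgeom.mul_left (r ^ (1 - β) * exp r)).of_norm_bounded_eventually_nat ?_
  filter_upwards [hlarge] with k hk
  have hpow : r ^ (α * k + β - 1) = (r ^ α) ^ k * r ^ (β - 1) := by
    rw [← rpow_mul_natCast hr.le, ← rpow_add hr, add_sub_assoc]
  rw [norm_div, norm_pow, norm_eq_abs, norm_eq_abs, abs_of_pos (Gamma_pos_of_pos (by linarith))]
  calc |z| ^ k / Gamma (α * k + β) ≤ |z| ^ k / (r ^ (α * k + β - 1) * exp (-r)) := by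
        gcongr
        exact rpow_mul_exp_neg_le_Gamma hr.le hk
    _ = r ^ (1 - β) * exp r * (|z| / r ^ α) ^ k := by
        rw [hpow, exp_neg, ← neg_sub β 1, rpow_neg hr.le, div_pow]
        field_simp

theorem mlE_eq_one_div_Gamma_add (hα : 0 < α) (β z : ℝ) :
    mlE α β z = 1 / Gamma β + z * mlE α (α + β) z := by
  rw [mlE, (summable_mlE hα β z).tsum_eq_zero_add, mlE, ← tsum_mul_left]
  simp only [pow_zero, Nat.cast_zero, mul_zero, zero_add, pow_succ', mul_div_assoc, Nat.cast_add,
    Nat.cast_one, mul_add, mul_one, add_assoc]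

theorem continuous_mlE (hα : 0 < α) (β : ℝ) : Continuous (mlE α β) := by
  refine continuous_iff_continuousAt.2 fun z => ?_
  refine ContinuousOn.continuousAt (s := Metric.closedBall 0 (|z| + 1)) ?_
    (Metric.closedBall_mem_nhds_of_mem (by simp))
  refine continuousOn_tsum (fun k => by fun_prop) (summable_mlE hα β (|z| + 1)).norm
    fun k x hx => ?_
  rw [mem_closedBall_zero_iff] at hx
  simp only [norm_div, norm_pow]
  gcongr
  exact hx.trans (le_abs_self _)

end MittagLeffler

/-- The causal convolution `(k * f)(t) = ∫₀ᵗ k(t - s) f(s) ds`: the Volterra operator of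
convolution type with kernel `k`, applied to `f`. -/
noncomputable def causalConv (k f : ℝ → ℝ) (t : ℝ) : ℝ :=
  ∫ s in 0..t, k (t - s) * f s

section CausalConv

variable {k f g : ℝ → ℝ} {t T : ℝ}

theorem causalConv_eq_integral_mul_comp_sub (k f : ℝ → ℝ) (t : ℝ) :
    causalConv k f t = ∫ x in 0..t, k x * f (t - x) := by
  simpa [causalConv] using
    (intervalIntegral.integral_comp_sub_left (a := 0) (b := t) (fun s => k (t - s) * f s) t).symm

@[simp]
theorem causalConv_apply_zero (k f : ℝ → ℝ) : causalConv k f 0 = 0 :=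
  intervalIntegral.integral_same

theorem causalConv_congr (ht : 0 ≤ t) (h : EqOn f g (Icc 0 t)) :
    causalConv k f t = causalConv k g t :=
  intervalIntegral.integral_congr fun s hs => by
    simp only [h (uIcc_of_le ht ▸ hs)]

theorem causalConv_const_mul (k f : ℝ → ℝ) (c t : ℝ) :
    causalConv k (fun s => c * f s) t = c * causalConv k f t := by
  simp only [causalConv, mul_left_comm, intervalIntegral.integral_const_mul]

theorem intervalIntegrable_kernel_mul (ht : 0 ≤ t) (hk : IntervalIntegrable k volume 0 t)
    (hf : ContinuousOn f (Icc 0 t)) :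
    IntervalIntegrable (fun s => k (t - s) * f s) volume 0 t := by
  refine IntervalIntegrable.mul_continuousOn ?_ (by rwa [uIcc_of_le ht])
  simpa using (hk.comp_sub_left t (f := k)).symm

theorem causalConv_add (ht : 0 ≤ t) (hk : IntervalIntegrable k volume 0 t)
    (hf : ContinuousOn f (Icc 0 t)) (hg : ContinuousOn g (Icc 0 t)) :
    causalConv k (fun s => f s + g s) t = causalConv k f t + causalConv k g t := by
  simp only [causalConv, mul_add]
  exact intervalIntegral.integral_add (intervalIntegrable_kernel_mul ht hk hf)
    (intervalIntegrable_kernel_mul ht hk hg)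

theorem causalConv_sum {ι : Type*} (S : Finset ι) {F : ι → ℝ → ℝ} (ht : 0 ≤ t)
    (hk : IntervalIntegrable k volume 0 t) (hF : ∀ i ∈ S, ContinuousOn (F i) (Icc 0 t)) :
    causalConv k (fun s => ∑ i ∈ S, F i s) t = ∑ i ∈ S, causalConv k (F i) t := by
  simp only [causalConv, Finset.mul_sum]
  exact intervalIntegral.integral_finsetSum fun i hi =>
    intervalIntegrable_kernel_mul ht hk (hF i hi)

theorem abs_causalConv_sub_le {e : ℝ → ℝ} (ht : 0 ≤ t) (hk : IntervalIntegrable k volume 0 t)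
    (hk₀ : ∀ x ∈ Icc 0 t, 0 ≤ k x) (hf : ContinuousOn f (Icc 0 t)) (hg : ContinuousOn g (Icc 0 t))
    (he : ContinuousOn e (Icc 0 t)) (hfg : ∀ s ∈ Icc 0 t, |f s - g s| ≤ e s) :
    |causalConv k f t - causalConv k g t| ≤ causalConv k e t := by
  have hle : ∀ s ∈ Ioc 0 t, ‖k (t - s) * f s - k (t - s) * g s‖ ≤ k (t - s) * e s := fun s hs => by
    have hkts : 0 ≤ k (t - s) := hk₀ _ ⟨by linarith [hs.2], by linarith [hs.1]⟩
    rw [← mul_sub, norm_mul, norm_of_nonneg hkts]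
    exact mul_le_mul_of_nonneg_left (hfg s (Ioc_subset_Icc_self hs)) hkts
  rw [causalConv, causalConv, ← intervalIntegral.integral_sub
    (intervalIntegrable_kernel_mul ht hk hf) (intervalIntegrable_kernel_mul ht hk hg)]
  exact intervalIntegral.norm_integral_le_of_norm_le ht (.of_forall hle)
    (intervalIntegrable_kernel_mul ht hk he)

theorem continuousOn_causalConv_of_eq_zero {C : ℝ} (hk : IntervalIntegrable k volume 0 T)
    (hf : Continuous f) (hfC : ∀ s, |f s| ≤ C) (hf₀ : ∀ s ≤ 0, f s = 0) :
    ContinuousOn (causalConv k f) (Icc 0 T) := by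
  have hcont : Continuous fun t => ∫ x in 0..T, k x * f (t - x) := by
    refine intervalIntegral.continuous_of_dominated_interval (bound := fun x => |k x| * C)
      (fun t => ?_) (fun t => .of_forall fun x _ => ?_) (hk.abs.mul_const C)
      (.of_forall fun x _ => by fun_prop)
    · exact hk.def'.aestronglyMeasurable.mul
        (Continuous.aestronglyMeasurable (f := fun x => f (t - x)) (by fun_prop))
    · rw [norm_mul, norm_eq_abs, norm_eq_abs]
      exact mul_le_mul_of_nonneg_left (hfC _) (abs_nonneg _)
  refine hcont.continuousOn.congr fun t ht => ?_
  have hint : IntervalIntegrable (fun x => k x * f (t - x)) volume 0 T :=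
    hk.mul_continuousOn (by fun_prop)
  have hmem : t ∈ uIcc 0 T := by rwa [uIcc_of_le (ht.1.trans ht.2)]
  have hzero : ∫ x in t..T, k x * f (t - x) = 0 := by
    refine intervalIntegral.integral_zero_ae (.of_forall fun x hx => ?_)
    rw [uIoc_of_le ht.2] at hx
    rw [hf₀ (t - x) (by linarith [hx.1]), mul_zero]
  simp only [causalConv_eq_integral_mul_comp_sub]
  rw [← intervalIntegral.integral_add_adjacent_intervals (b := t) (c := T)
    (hint.mono_set (uIcc_subset_uIcc_left hmem)) (hint.mono_set (uIcc_subset_uIcc_right hmem)),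
    hzero, add_zero]

theorem continuousOn_causalConv (hk : IntervalIntegrable k volume 0 T)
    (hf : ContinuousOn f (Icc 0 T)) : ContinuousOn (causalConv k f) (Icc 0 T) := by
  rcases lt_or_ge T 0 with hT | hT
  · simp [Icc_eq_empty hT.not_ge]
  -- Subtracting `f 0` lets the constant extension of `f` vanish on the negative half-line.
  let f₁ : ℝ → ℝ := fun s => IccExtend hT ((Icc 0 T).domRestrict f) s - f 0
  have hf₁ : Continuous f₁ := hf.domRestrict.Icc_extend'.sub continuous_const
  have hf₁_eq : ∀ s ∈ Icc 0 T, f₁ s = f s - f 0 := fun s hs => by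
    simp only [f₁, IccExtend_of_mem _ _ hs, domRestrict_apply]
  have hf₁_zero : ∀ s ≤ 0, f₁ s = 0 := fun s hs => by
    simp only [f₁, IccExtend_of_le_left _ _ hs, domRestrict_apply, sub_self]
  obtain ⟨C, hC⟩ := isCompact_Icc.exists_bound_of_continuousOn
    (hf.sub (continuousOn_const (c := f 0)))
  have hf₁_le : ∀ s, |f₁ s| ≤ C := fun s => hC _ (projIcc 0 T hT s).2
  have hprim : ContinuousOn (fun t => ∫ x in 0..t, k x) (Icc 0 T) := by
    simpa [uIcc_of_le hT] using intervalIntegral.continuousOn_primitive_interval' hk left_mem_uIcc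
  refine ((hprim.const_mul (f 0)).add
    (continuousOn_causalConv_of_eq_zero hk hf₁ hf₁_le hf₁_zero)).congr fun t ht => ?_
  have hkt : IntervalIntegrable k volume 0 t :=
    hk.mono_set (uIcc_subset_uIcc_left (by rwa [uIcc_of_le hT]))
  calc causalConv k f t = causalConv k (fun s => f 0 + f₁ s) t :=
        causalConv_congr ht.1 fun s hs => by
          simp only [hf₁_eq s ⟨hs.1, hs.2.trans ht.2⟩, add_sub_cancel]
    _ = causalConv k (fun _ => f 0) t + causalConv k f₁ t :=
        causalConv_add ht.1 hkt continuousOn_const hf₁.continuousOn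
    _ = f 0 * (∫ x in 0..t, k x) + causalConv k f₁ t := by
        rw [causalConv_eq_integral_mul_comp_sub, intervalIntegral.integral_mul_const, mul_comm]

end CausalConv

/-- The Riemann-Liouville kernel `x^(β-1) / Γ(β)`; causal convolution with it is the fractional
integral of order `β`. -/
noncomputable def rlKernel (β x : ℝ) : ℝ :=
  x ^ (β - 1) / Gamma β

section RiemannLiouville

variable {α β t T : ℝ}

theorem rlKernel_nonneg {x : ℝ} (hβ : 0 < β) (hx : 0 ≤ x) : 0 ≤ rlKernel β x :=
  div_nonneg (rpow_nonneg hx _) (Gamma_pos_of_pos hβ).le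

theorem intervalIntegrable_rlKernel (hβ : 0 < β) (a b : ℝ) :
    IntervalIntegrable (rlKernel β) volume a b :=
  (intervalIntegral.intervalIntegrable_rpow' (by linarith)).div_const _

theorem continuous_rlKernel (hβ : 1 ≤ β) : Continuous (rlKernel β) :=
  (continuous_rpow_const (by linarith)).div_const _

theorem rlKernel_natCast_add_one (n : ℕ) (x : ℝ) : rlKernel (n + 1) x = x ^ n / n ! := by
  rw [rlKernel, Gamma_nat_eq_factorial, add_sub_cancel_right, rpow_natCast]

theorem rlKernel_apply_zero (hβ : 1 < β) : rlKernel β 0 = 0 := by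
  rw [rlKernel, zero_rpow (by linarith), zero_div]

theorem causalConv_rlKernel (β : ℝ) (f : ℝ → ℝ) (t : ℝ) :
    causalConv (rlKernel β) f t =
      1 / Gamma β * ∫ s in 0..t, (t - s) ^ (β - 1) * f s := by
  simp only [causalConv, rlKernel, div_mul_eq_mul_div, intervalIntegral.integral_div, one_mul]

theorem causalConv_rlKernel_rlKernel (hα : 0 < α) (hβ : 0 < β) (ht : 0 < t) :
    causalConv (rlKernel α) (rlKernel β) t = rlKernel (α + β) t := by
  have hΓα := (Gamma_pos_of_pos hα).ne'
  have hΓβ := (Gamma_pos_of_pos hβ).ne'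
  have hfactor : ∀ x, rlKernel α x * rlKernel β (t - x) =
      x ^ (α - 1) * (t - x) ^ (β - 1) / (Gamma α * Gamma β) := fun x => by
    rw [rlKernel, rlKernel, div_mul_div_comm]
  rw [causalConv_eq_integral_mul_comp_sub]
  simp only [hfactor, intervalIntegral.integral_div, integral_rpow_mul_sub_rpow hα hβ ht]
  rw [rlKernel]
  field_simp

theorem causalConv_rlKernel_rlKernel_of_one_le (hα : 0 < α) (hβ : 1 ≤ β) (ht : 0 ≤ t) :
    causalConv (rlKernel α) (rlKernel β) t = rlKernel (α + β) t := by
  rcases ht.eq_or_lt with rfl | ht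
  · rw [causalConv_apply_zero, rlKernel_apply_zero (by linarith)]
  · exact causalConv_rlKernel_rlKernel hα (by linarith) ht

theorem causalConv_rlKernel_sum {ι : Type*} (S : Finset ι) (c γ : ι → ℝ) (hα : 0 < α)
    (hγ : ∀ i ∈ S, 1 ≤ γ i) (ht : 0 ≤ t) :
    causalConv (rlKernel α) (fun s => ∑ i ∈ S, c i * rlKernel (γ i) s) t =
      ∑ i ∈ S, c i * rlKernel (α + γ i) t := by
  rw [causalConv_sum S ht (intervalIntegrable_rlKernel hα _ _) fun i hi =>
    ((continuous_rlKernel (hγ i hi)).const_mul _).continuousOn]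
  refine Finset.sum_congr rfl fun i hi => ?_
  rw [causalConv_const_mul, causalConv_rlKernel_rlKernel_of_one_le hα (hγ i hi) ht]

theorem eval_eq_sum_rlKernel (p : ℝ[X]) (x : ℝ) :
    p.eval x = ∑ i ∈ Finset.range (p.natDegree + 1), p.coeff i * i ! * rlKernel (i + 1) x := by
  rw [p.eval_eq_sum_range]
  refine Finset.sum_congr rfl fun i _ => ?_
  rw [rlKernel_natCast_add_one, mul_assoc, mul_div_cancel₀]
  positivity

theorem causalConv_rlKernel_comp_eval (hα : 0 < α) (hβ : 0 < β) (p : ℝ[X]) (ht : 0 ≤ t) :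
    causalConv (rlKernel β) (causalConv (rlKernel α) fun s => p.eval s) t =
      causalConv (rlKernel (β + α)) (fun s => p.eval s) t := by
  simp only [eval_eq_sum_rlKernel p]
  have hγ : ∀ i ∈ Finset.range (p.natDegree + 1), (1 : ℝ) ≤ i + 1 := fun i _ => by simp
  rw [causalConv_congr ht fun s hs => causalConv_rlKernel_sum _ _ _ hα hγ hs.1,
    causalConv_rlKernel_sum _ _ _ hβ (fun i hi => by linarith [hγ i hi]) ht,
    causalConv_rlKernel_sum _ _ _ (by positivity) hγ ht]
  simp only [add_assoc]

theorem abs_causalConv_rlKernel_sub_le {f g e : ℝ → ℝ} (hα : 0 < α) (ht : 0 ≤ t)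
    (hf : ContinuousOn f (Icc 0 t)) (hg : ContinuousOn g (Icc 0 t)) (he : ContinuousOn e (Icc 0 t))
    (hfg : ∀ s ∈ Icc 0 t, |f s - g s| ≤ e s) :
    |causalConv (rlKernel α) f t - causalConv (rlKernel α) g t| ≤ causalConv (rlKernel α) e t :=
  abs_causalConv_sub_le ht (intervalIntegrable_rlKernel hα _ _)
    (fun _ hx => rlKernel_nonneg hα hx.1) hf hg he hfg

theorem continuousOn_causalConv_rlKernel {f : ℝ → ℝ} (hα : 0 < α) (hf : ContinuousOn f (Icc 0 T)) :
    ContinuousOn (causalConv (rlKernel α) f) (Icc 0 T) :=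
  continuousOn_causalConv (intervalIntegrable_rlKernel hα _ _) hf

theorem abs_causalConv_rlKernel_comp_sub_le {f g : ℝ → ℝ} {ε : ℝ} (hα : 0 < α) (hβ : 0 < β)
    (ht : 0 ≤ t) (hf : ContinuousOn f (Icc 0 t)) (hg : ContinuousOn g (Icc 0 t))
    (hfg : ∀ s ∈ Icc 0 t, |f s - g s| ≤ ε) :
    |causalConv (rlKernel β) (causalConv (rlKernel α) f) t -
      causalConv (rlKernel β) (causalConv (rlKernel α) g) t| ≤
      causalConv (rlKernel (β + α)) (fun _ => ε) t :=
  calc _ ≤ causalConv (rlKernel β) (causalConv (rlKernel α) fun _ => ε) t :=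
        abs_causalConv_rlKernel_sub_le hβ ht (continuousOn_causalConv_rlKernel hα hf)
          (continuousOn_causalConv_rlKernel hα hg)
          (continuousOn_causalConv_rlKernel hα continuousOn_const) fun s hs =>
            have hsub := Icc_subset_Icc_right hs.2
            abs_causalConv_rlKernel_sub_le hα hs.1 (hf.mono hsub) (hg.mono hsub)
              continuousOn_const fun r hr => hfg r (hsub hr)
    _ = causalConv (rlKernel (β + α)) (fun _ => ε) t := by
        simpa using causalConv_rlKernel_comp_eval hα hβ (C ε) ht

-- Both sides depend continuously on `f` in the uniform norm and agree on polynomials.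
theorem causalConv_rlKernel_comp {f : ℝ → ℝ} (hα : 0 < α) (hβ : 0 < β) (ht : 0 ≤ t)
    (hf : ContinuousOn f (Icc 0 t)) :
    causalConv (rlKernel β) (causalConv (rlKernel α) f) t =
      causalConv (rlKernel (β + α)) f t := by
  set K := causalConv (rlKernel (β + α)) (fun _ => 1) t
  have hclose : ∀ δ > 0, dist (causalConv (rlKernel β) (causalConv (rlKernel α) f) t)
      (causalConv (rlKernel (β + α)) f t) ≤ 2 * K * δ := fun δ hδ => by
    obtain ⟨p, hp⟩ := exists_polynomial_near_of_continuousOn 0 t f hf δ hδ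
    have hpf : ∀ s ∈ Icc 0 t, |p.eval s - f s| ≤ δ := fun s hs => (hp s hs).le
    have hfp : ∀ s ∈ Icc 0 t, |f s - p.eval s| ≤ δ := fun s hs => abs_sub_comm _ (f s) ▸ hpf s hs
    have hcont : ContinuousOn (fun s => p.eval s) (Icc 0 t) := p.continuous.continuousOn
    have hδK : causalConv (rlKernel (β + α)) (fun _ => δ) t = δ * K := by
      rw [← causalConv_const_mul]
      simp only [mul_one]
    have hleft : |causalConv (rlKernel β) (causalConv (rlKernel α) f) t -
        causalConv (rlKernel (β + α)) (fun s => p.eval s) t| ≤ δ * K := by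
      rw [← hδK, ← causalConv_rlKernel_comp_eval hα hβ p ht]
      exact abs_causalConv_rlKernel_comp_sub_le hα hβ ht hf hcont hfp
    have hright : |causalConv (rlKernel (β + α)) (fun s => p.eval s) t -
        causalConv (rlKernel (β + α)) f t| ≤ δ * K := by
      rw [← hδK]
      exact abs_causalConv_rlKernel_sub_le (add_pos hβ hα) ht hcont hf continuousOn_const hpf
    refine (dist_triangle _ (causalConv (rlKernel (β + α)) (fun s => p.eval s) t) _).trans ?_
    rw [Real.dist_eq, Real.dist_eq]
    linarith
  have hK : 0 ≤ 2 * K := by simpa using dist_nonneg.trans (hclose 1 one_pos)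
  refine eq_of_forall_dist_le fun ε hε => (hclose (ε / (2 * K + 1)) (by positivity)).trans ?_
  rw [mul_div_left_comm]
  exact mul_le_of_le_one_right hε.le ((div_le_one (by positivity)).2 (by linarith))

end RiemannLiouville

/-- The Mittag-Leffler kernel `x^(β-1) E_{α,β}(M x^α)`. For `β = α` it is the resolvent kernel of
the Volterra equation `u = f + M (rlKernel α * u)`. -/
noncomputable def mlKernel (α β M x : ℝ) : ℝ :=
  x ^ (β - 1) * mlE α β (M * x ^ α)

section MittagLefflerKernel

variable {α β M t T : ℝ}

theorem intervalIntegrable_mlKernel (hα : 0 < α) (hβ : 0 < β) (M a b : ℝ) :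
    IntervalIntegrable (mlKernel α β M) volume a b := by
  have hcont : Continuous fun x : ℝ => mlE α β (M * x ^ α) :=
    (continuous_mlE hα β).comp ((continuous_rpow_const hα.le).const_mul M)
  exact (intervalIntegral.intervalIntegrable_rpow' (by linarith)).mul_continuousOn
    hcont.continuousOn

theorem hasSum_mlKernel (hα : 0 < α) (β M : ℝ) {x : ℝ} (hx : 0 < x) :
    HasSum (fun k : ℕ => M ^ k * rlKernel (α * k + β) x) (mlKernel α β M x) := by
  refine ((summable_mlE hα β (M * x ^ α)).hasSum.mul_left (x ^ (β - 1))).congr_fun fun k => ?_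
  rw [rlKernel, add_sub_assoc, rpow_add hx, rpow_mul_natCast hx.le, mul_pow]
  ring

theorem mlKernel_eq_rlKernel_add (hα : 0 < α) (hβ : 1 ≤ β) (M : ℝ) (ht : 0 ≤ t) :
    mlKernel α β M t = rlKernel β t + M * mlKernel α (α + β) M t := by
  have hpow : t ^ (α + β - 1) = t ^ α * t ^ (β - 1) := by
    rw [add_sub_assoc, rpow_add_of_nonneg ht hα.le (by linarith)]
  rw [mlKernel, mlE_eq_one_div_Gamma_add hα, rlKernel, mlKernel, hpow]
  ring

theorem hasSum_causalConv_mlKernel {f : ℝ → ℝ} (hα : 0 < α) (hβ : 0 < β) (M : ℝ) (ht : 0 ≤ t)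
    (hf : ContinuousOn f (Icc 0 t)) :
    HasSum (fun k : ℕ => M ^ k * causalConv (rlKernel (α * k + β)) f t)
      (causalConv (mlKernel α β M) f t) := by
  obtain ⟨C, hC⟩ := isCompact_Icc.exists_bound_of_continuousOn hf
  have hf_comp : ContinuousOn (fun x => f (t - x)) (uIcc 0 t) := by
    rw [uIcc_of_le ht]
    exact hf.comp (by fun_prop) fun x hx => ⟨sub_nonneg.2 hx.2, sub_le_self t hx.1⟩
  have hβk : ∀ k : ℕ, 0 < α * k + β := fun k => by positivity
  have hbound : ∀ x ∈ Ioc 0 t, HasSum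
      (fun k : ℕ => |M| ^ k * rlKernel (α * k + β) x * C) (mlKernel α β |M| x * C) :=
    fun x hx => (hasSum_mlKernel hα β |M| hx.1).mul_right C
  simp only [causalConv_eq_integral_mul_comp_sub, ← intervalIntegral.integral_const_mul]
  refine intervalIntegral.hasSum_integral_of_dominated_convergence
    (fun k x => |M| ^ k * rlKernel (α * k + β) x * C) (fun k => ?_)
    (fun k => .of_forall fun x hx => ?_) (.of_forall fun x hx => ?_) ?_
    (.of_forall fun x hx => ?_)
  · exact (((intervalIntegrable_rlKernel (hβk k) 0 t).mul_continuousOn hf_comp).const_mul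
      _).def'.aestronglyMeasurable
  · rw [uIoc_of_le ht] at hx
    rw [norm_mul, norm_mul, norm_pow, norm_eq_abs M, mul_assoc,
      norm_of_nonneg (rlKernel_nonneg (hβk k) hx.1.le)]
    have hfC := hC (t - x) ⟨sub_nonneg.2 hx.2, sub_le_self t hx.1.le⟩
    have hk_nonneg := rlKernel_nonneg (hβk k) hx.1.le
    gcongr
  · exact (hbound x (uIoc_of_le ht ▸ hx)).summable
  · refine ((intervalIntegrable_mlKernel hα hβ |M| 0 t).mul_const C).congr fun x hx => ?_
    exact (hbound x (uIoc_of_le ht ▸ hx)).tsum_eq.symm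
  · rw [uIoc_of_le ht] at hx
    simpa only [mul_assoc] using (hasSum_mlKernel hα β M hx.1).mul_right (f (t - x))

theorem causalConv_mlKernel_rlKernel {γ : ℝ} (hα : 0 < α) (hβ : 0 < β) (hγ : 1 ≤ γ) (M : ℝ)
    (ht : 0 ≤ t) :
    causalConv (mlKernel α β M) (rlKernel γ) t = mlKernel α (β + γ) M t := by
  rcases ht.eq_or_lt with rfl | ht
  · rw [causalConv_apply_zero, mlKernel, zero_rpow (by linarith), zero_mul]
  refine (hasSum_causalConv_mlKernel hα hβ M ht.le
    (continuous_rlKernel hγ).continuousOn).unique ?_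
  refine (hasSum_mlKernel hα (β + γ) M ht).congr_fun fun k => ?_
  rw [causalConv_rlKernel_rlKernel (by positivity) (by linarith) ht, add_assoc]

theorem causalConv_mlKernel_eq_add {f : ℝ → ℝ} (hα : 0 < α) (hβ : 0 < β) (M : ℝ) (ht : 0 ≤ t)
    (hf : ContinuousOn f (Icc 0 t)) :
    causalConv (mlKernel α β M) f t = causalConv (rlKernel β) f t +
      M * causalConv (mlKernel α β M) (causalConv (rlKernel α) f) t := by
  have hterm : ∀ k : ℕ, M ^ (k + 1) * causalConv (rlKernel (α * ↑(k + 1) + β)) f t =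
      M * (M ^ k * causalConv (rlKernel (α * k + β)) (causalConv (rlKernel α) f) t) := fun k => by
    rw [causalConv_rlKernel_comp hα (by positivity) ht hf, pow_succ', mul_assoc, Nat.cast_succ,
      mul_add_one, add_right_comm]
  have hsum := hasSum_causalConv_mlKernel hα hβ M ht hf
  rw [← hsum.tsum_eq, hsum.summable.tsum_eq_zero_add]
  simp only [hterm, tsum_mul_left, pow_zero, Nat.cast_zero, mul_zero, zero_add, one_mul,
    (hasSum_causalConv_mlKernel hα hβ M ht (continuousOn_causalConv_rlKernel hα hf)).tsum_eq]

theorem sum_mlKernel_eq_add {ι : Type*} (S : Finset ι) {c γ : ι → ℝ} (hα : 0 < α)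
    (hγ : ∀ i ∈ S, 1 ≤ γ i) (M : ℝ) (ht : 0 ≤ t) :
    ∑ i ∈ S, c i * mlKernel α (γ i) M t = ∑ i ∈ S, c i * rlKernel (γ i) t +
      M * causalConv (mlKernel α α M) (fun s => ∑ i ∈ S, c i * rlKernel (γ i) s) t := by
  rw [causalConv_sum S ht (intervalIntegrable_mlKernel hα hα M 0 t) fun i hi =>
      ((continuous_rlKernel (hγ i hi)).const_mul _).continuousOn,
    Finset.mul_sum, ← Finset.sum_add_distrib]
  refine Finset.sum_congr rfl fun i hi => ?_
  rw [causalConv_const_mul, causalConv_mlKernel_rlKernel hα hα (hγ i hi) M ht,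
    mlKernel_eq_rlKernel_add hα (hγ i hi) M ht]
  ring

theorem eq_add_causalConv_mlKernel {u f : ℝ → ℝ} (hα : 0 < α) (hu : ContinuousOn u (Icc 0 T))
    (hf : ContinuousOn f (Icc 0 T))
    (h : ∀ t ∈ Icc 0 T, u t = f t + M * causalConv (rlKernel α) u t) (ht : t ∈ Icc 0 T) :
    u t = f t + M * causalConv (mlKernel α α M) f t := by
  have hsub : Icc 0 t ⊆ Icc 0 T := Icc_subset_Icc_right ht.2
  have hconv : causalConv (mlKernel α α M) u t = causalConv (mlKernel α α M) f t +
      M * causalConv (mlKernel α α M) (causalConv (rlKernel α) u) t := by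
    rw [causalConv_congr ht.1 fun s hs => h s (hsub hs),
      causalConv_add ht.1 (intervalIntegrable_mlKernel hα hα _ _ _) (hf.mono hsub)
        ((continuousOn_causalConv_rlKernel hα (hu.mono hsub)).const_mul M), causalConv_const_mul]
  have hres := causalConv_mlKernel_eq_add hα hα M ht.1 (hu.mono hsub)
  rw [h t ht, ← add_right_cancel (hconv.symm.trans hres)]

theorem eq_sum_mlKernel_add_causalConv {ι : Type*} (S : Finset ι) {c γ : ι → ℝ} {u h : ℝ → ℝ}
    (hα : 0 < α) (hγ : ∀ i ∈ S, 1 ≤ γ i) (hu : ContinuousOn u (Icc 0 T))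
    (hh : ContinuousOn h (Icc 0 T))
    (heq : ∀ t ∈ Icc 0 T, u t = ∑ i ∈ S, c i * rlKernel (γ i) t +
      causalConv (rlKernel α) (fun s => M * u s + h s) t) (ht : t ∈ Icc 0 T) :
    u t = ∑ i ∈ S, c i * mlKernel α (γ i) M t + causalConv (mlKernel α α M) h t := by
  have hsum : ContinuousOn (fun t => ∑ i ∈ S, c i * rlKernel (γ i) t) (Icc 0 T) :=
    continuousOn_finsetSum S fun i hi =>
      ((continuous_rlKernel (hγ i hi)).const_mul _).continuousOn
  have hIh := continuousOn_causalConv_rlKernel hα hh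
  have hvolterra : ∀ t ∈ Icc 0 T, u t =
      (∑ i ∈ S, c i * rlKernel (γ i) t + causalConv (rlKernel α) h t) +
        M * causalConv (rlKernel α) u t := fun t ht => by
    have hsub : Icc 0 t ⊆ Icc 0 T := Icc_subset_Icc_right ht.2
    rw [heq t ht, causalConv_add ht.1 (intervalIntegrable_rlKernel hα _ _)
      ((hu.mono hsub).const_mul M) (hh.mono hsub), causalConv_const_mul]
    ring
  have hsub : Icc 0 t ⊆ Icc 0 T := Icc_subset_Icc_right ht.2
  rw [eq_add_causalConv_mlKernel (f := fun s =>
      ∑ i ∈ S, c i * rlKernel (γ i) s + causalConv (rlKernel α) h s)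
      hα hu (hsum.add hIh) hvolterra ht,
    causalConv_add ht.1 (intervalIntegrable_mlKernel hα hα M 0 t) (hsum.mono hsub) (hIh.mono hsub),
    sum_mlKernel_eq_add S hα hγ M ht.1, causalConv_mlKernel_eq_add hα hα M ht.1 (hh.mono hsub)]
  ring

end MittagLefflerKernel

theorem variation_of_constants_general {α T M : ℝ} (hα : 0 < α) {n : ℕ} (c : Fin n → ℝ)
    {h y : ℝ → ℝ} (hh : ContinuousOn h (Icc 0 T)) (hy_cont : ContinuousOn y (Icc 0 T))
    (hy : ∀ t ∈ Icc 0 T, y t = ∑ j, c j / (j : ℕ)! * t ^ (j : ℕ) +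
      1 / Gamma α * ∫ s in 0..t, (t - s) ^ (α - 1) * (M * y s + h s)) :
    ∀ t ∈ Icc 0 T, y t = ∑ j, c j * t ^ (j : ℕ) * mlE α ((j : ℕ) + 1) (M * t ^ α) +
      ∫ τ in 0..t, (t - τ) ^ (α - 1) * mlE α α (M * (t - τ) ^ α) * h τ := by
  intro t ht
  have hdata : ∀ t, ∑ j, c j / (j : ℕ)! * t ^ (j : ℕ) = ∑ j, c j * rlKernel ((j : ℕ) + 1) t :=
    fun t => by simp only [rlKernel_natCast_add_one, mul_div_assoc', div_mul_eq_mul_div]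
  have hvolterra : ∀ t ∈ Icc 0 T, y t = ∑ j, c j * rlKernel ((j : ℕ) + 1) t +
      causalConv (rlKernel α) (fun s => M * y s + h s) t := fun t ht => by
    rw [hy t ht, hdata, causalConv_rlKernel]
  rw [eq_sum_mlKernel_add_causalConv Finset.univ hα (fun j _ => by simp) hy_cont hh hvolterra ht]
  simp only [mlKernel, causalConv, add_sub_cancel_right, rpow_natCast, mul_assoc]

/-- Variation-of-constants formula for `D^α y = M y + g(t,y)`, `α ∈ (1,2)`. -/
theorem variation_of_constants
    (α T M L y₀ y₁ : ℝ) (hα₁ : 1 < α) (hα₂ : α < 2) (hT : 0 < T)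
    (g : ℝ → ℝ → ℝ)
    (hg_cont : ContinuousOn (fun p : ℝ × ℝ => g p.1 p.2) (Set.Icc 0 T ×ˢ Set.univ))
    (hg_lip : ∀ t ∈ Set.Icc (0 : ℝ) T, ∀ x y : ℝ, |g t x - g t y| ≤ L * |x - y|)
    (y : ℝ → ℝ) (hy_cont : ContinuousOn y (Set.Icc 0 T))
    (hy : ∀ t ∈ Set.Icc (0 : ℝ) T,
      y t = y₀ + y₁ * t
        + (1 / Real.Gamma α)
          * ∫ s in (0 : ℝ)..t, (t - s) ^ (α - 1) * (M * y s + g s (y s))) :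
    ∀ t ∈ Set.Icc (0 : ℝ) T,
      y t = y₀ * mlE α 1 (M * t ^ α) + y₁ * t * mlE α 2 (M * t ^ α)
        + ∫ τ in (0 : ℝ)..t, (t - τ) ^ (α - 1) * mlE α α (M * (t - τ) ^ α) * g τ (y τ) := by
  have hh : ContinuousOn (fun s => g s (y s)) (Icc 0 T) :=
    hg_cont.comp (continuousOn_id.prodMk hy_cont) fun _ hs => ⟨hs, mem_univ _⟩
  simpa [one_add_one_eq_two] using
    variation_of_constants_general (by linarith) ![y₀, y₁] hh hy_cont (by simpa using hy)
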